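/- Let r,s,t,u be integers with ru−st=±1 and s even. Then there is a (unique) group homomorphism φ₇ : G(r,s,t,u) → ℤ/2ℤ sending the generators a ↦ 1, b ↦ 1, c ↦ 1, and its kernel is isomorphic, as an abstract group, to G(r, s/2, 2t, u). -/

import Mathlib

/-- The relators of the presentation of the fundamental group of the sapphire
Sol 3-manifold determined by the matrix `[[r, s], [t, u]]`:
`a·b·a⁻¹·b`, `c²·a^(−2r)·b^(−s)` and `c·a^(2t)·b^u·c⁻¹·a^(2t)·b^u`,
where `a, b, c` are the generators `of 0, of 1, of 2`. -/
def sapphireRels (r s t u : ℤ) : Set (FreeGroup (Fin 3)) :=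
  { FreeGroup.of 0 * FreeGroup.of 1 * (FreeGroup.of 0)⁻¹ * FreeGroup.of 1,
    FreeGroup.of 2 ^ (2 : ℤ) * FreeGroup.of 0 ^ (-(2 * r)) * FreeGroup.of 1 ^ (-s),
    FreeGroup.of 2 * FreeGroup.of 0 ^ (2 * t) * FreeGroup.of 1 ^ u * (FreeGroup.of 2)⁻¹ *
      FreeGroup.of 0 ^ (2 * t) * FreeGroup.of 1 ^ u }

/-- The fundamental group `G(r,s,t,u)` of the sapphire Sol 3-manifold. -/
abbrev SapphireGroup (r s t u : ℤ) := PresentedGroup (sapphireRels r s t u)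

/-!
Write `w = a ^ (2 * t) * b ^ u`, so that `b` is inverted by `a` and `w` by `c`. For all `n` and `k`
there is an automorphism `a ↦ a * b ^ n`, `c ↦ c * w ^ k` fixing `b` and `w`. The one with
`n = k = 1` turns the character with values `1, 1, 1` on the generators into the one with values
`0, 1, 0`, so the kernel of the latter may be considered instead. For `s = 2 * σ` and odd `u` this
kernel is the image of the map `G(r, σ, 2t, u) → G(r, 2σ, t, u)` given by `a ↦ a`, `b ↦ b ^ 2`,
`c ↦ c`: the image is normalized by `w`, contains `w ^ 2`, and together with `w` generates the whole
group.

The map is injective because `G(r, σ, 2t, u)` embeds into a group in which `b` acquires a square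
root completing `a` and `c` to a triple satisfying the relations of `G(r, 2σ, t, u)`. Indeed, in
`G(r, σ, 2t, u)` conjugation by its own `w = a ^ (4 * t) * b ^ u` is the square of the automorphism
with `n = -u`, `k = -1`, so there is a cyclic extension in which `w` has a square root inducing that
automorphism, and this square root of `w` yields one of `b`.
-/

variable {E F : Type*} [Group E] [Group F]

/-- `Inverts x y` says that conjugation by `x` sends `y` to `y⁻¹`. It is the Klein bottle relation,
which both the pair `a`, `b` and the pair `c`, `a ^ (2 * t) * b ^ u` satisfy in a sapphire group. -/
def Inverts (x y : E) : Prop :=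
  SemiconjBy x y y⁻¹

theorem inverts_iff_mul_eq_one {x y : E} : Inverts x y ↔ x * y * x⁻¹ * y = 1 := by
  rw [Inverts, SemiconjBy, mul_eq_one_iff_eq_inv, mul_inv_eq_iff_eq_mul]

theorem inverts_iff_semiconjBy_mul_sq_inv {x y : E} :
    Inverts x y ↔ SemiconjBy y x (x * (y ^ 2)⁻¹) := by
  have hmul : x * (y ^ 2)⁻¹ * y = x * y⁻¹ := by group
  rw [Inverts, ← SemiconjBy.inv_right_iff, inv_inv, SemiconjBy, SemiconjBy, hmul, eq_comm]

namespace Inverts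

variable {x y z : E}

theorem zpow_right (h : Inverts x y) (n : ℤ) : Inverts x (y ^ n) := by
  simpa only [Inverts, inv_zpow] using SemiconjBy.zpow_right h n

theorem mul_left (h : Inverts x y) (hz : Commute z y) : Inverts (x * z) y :=
  SemiconjBy.mul_left h hz

theorem map (h : Inverts x y) (f : E →* F) : Inverts (f x) (f y) := by
  simpa only [Inverts, map_inv] using SemiconjBy.map h f

theorem mul_sq (h : Inverts x y) : (x * y) ^ 2 = x ^ 2 :=
  calc (x * y) ^ 2 = x * y * (x * y) := sq _
    _ = x * y * (y⁻¹ * x) := by rw [SemiconjBy.eq h]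
    _ = x * x := by group
    _ = x ^ 2 := (sq x).symm

theorem mul_zpow_two_mul (h : Inverts x y) (m : ℤ) : (x * y) ^ (2 * m) = x ^ (2 * m) := by
  rw [zpow_mul, zpow_mul, zpow_ofNat, zpow_ofNat, h.mul_sq]

theorem commute_zpow_two_mul (h : Inverts x y) (m : ℤ) : Commute (x ^ (2 * m)) y := by
  have hxy : Commute (x ^ 2) y := by
    simpa only [inv_inv, sq, Commute] using (SemiconjBy.inv_right h).mul_left h
  rw [zpow_mul, zpow_ofNat]
  exact hxy.zpow_left m

theorem commute_zpow_mul_zpow (h : Inverts x y) (m n : ℤ) : Commute (x ^ (2 * m) * y ^ n) y :=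
  (h.commute_zpow_two_mul m).mul_left (Commute.zpow_self y n)

theorem zpow_mul_zpow_sq (h : Inverts x y) (m n : ℤ) :
    (x ^ (2 * m) * y ^ n) ^ 2 = x ^ (2 * (2 * m)) * (y ^ 2) ^ n := by
  rw [((h.commute_zpow_two_mul m).zpow_right n).mul_pow, ← zpow_ofNat, ← zpow_ofNat, ← zpow_ofNat,
    ← zpow_mul, ← zpow_mul, ← zpow_mul, mul_comm 2 n, mul_comm 2 (2 * m)]

theorem semiconjBy_zpow_mul_zpow (h : Inverts x y) (m n : ℤ) :
    SemiconjBy (x ^ (2 * m) * y ^ n) x (x * y ^ (-(2 * n))) := by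
  have hy : SemiconjBy (y ^ n) x (x * y ^ (-(2 * n))) :=
    calc y ^ n * x = x * (y ^ n)⁻¹ := by
          simpa only [inv_inv] using (SemiconjBy.inv_right (h.zpow_right n)).eq.symm
      _ = x * y ^ (-(2 * n)) * y ^ n := by group
  have hx : SemiconjBy (x ^ (2 * m)) (x * y ^ (-(2 * n))) (x * y ^ (-(2 * n))) :=
    (Commute.zpow_self x _).mul_right ((h.commute_zpow_two_mul m).zpow_right _)
  exact hx.mul_left hy

end Inverts

/-- A triple of elements of a group satisfying the defining relations of `SapphireGroup r s t u`;
such triples correspond to homomorphisms out of the sapphire group. -/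
structure IsSapphireTriple (r s t u : ℤ) (a b c : E) : Prop where
  inverts_left : Inverts a b
  sq_eq : c ^ 2 = b ^ s * a ^ (2 * r)
  inverts_right : Inverts c (a ^ (2 * t) * b ^ u)

theorem isSapphireTriple_iff_lift_eq_one {r s t u : ℤ} {a b c : E} :
    IsSapphireTriple r s t u a b c ↔
      ∀ x ∈ sapphireRels r s t u, FreeGroup.lift ![a, b, c] x = 1 := by
  have sq_iff : c ^ 2 = b ^ s * a ^ (2 * r) ↔ c ^ 2 * a ^ (-(2 * r)) * b ^ (-s) = 1 := by
    rw [← mul_inv_eq_one, mul_inv_rev, zpow_neg, zpow_neg, mul_assoc]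
  have inverts_iff : Inverts c (a ^ (2 * t) * b ^ u) ↔
      c * a ^ (2 * t) * b ^ u * c⁻¹ * a ^ (2 * t) * b ^ u = 1 := by
    simp only [inverts_iff_mul_eq_one, mul_assoc]
  have iff_and : IsSapphireTriple r s t u a b c ↔
      Inverts a b ∧ c ^ 2 = b ^ s * a ^ (2 * r) ∧ Inverts c (a ^ (2 * t) * b ^ u) :=
    ⟨fun h => ⟨h.1, h.2, h.3⟩, fun h => ⟨h.1, h.2.1, h.2.2⟩⟩
  rw [iff_and, inverts_iff_mul_eq_one, sq_iff, inverts_iff]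
  simp [sapphireRels, zpow_ofNat]

theorem isSapphireTriple_of_forall_sq_eq_one {E : Type*} [CommGroup E] (hE : ∀ x : E, x ^ 2 = 1)
    (r t u : ℤ) {s : ℤ} (hs : Even s) (a b c : E) : IsSapphireTriple r s t u a b c := by
  have inverts (x y : E) : Inverts x y := by
    rw [Inverts, inv_eq_of_mul_eq_one_left ((sq y).symm.trans (hE y))]
    exact Commute.all x y
  have zpow_eq_one (x : E) (m : ℤ) : x ^ (2 * m) = 1 := by
    rw [zpow_mul, zpow_ofNat, hE, one_zpow]
  obtain ⟨σ, rfl⟩ := hs.two_dvd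
  exact ⟨inverts _ _, by rw [hE, zpow_eq_one, zpow_eq_one, one_mul], inverts _ _⟩

namespace IsSapphireTriple

variable {r s t u σ : ℤ} {a b c : E}

theorem map (h : IsSapphireTriple r s t u a b c) (f : E →* F) :
    IsSapphireTriple r s t u (f a) (f b) (f c) where
  inverts_left := h.inverts_left.map f
  sq_eq := by simpa only [map_pow, map_zpow, map_mul] using congrArg f h.sq_eq
  inverts_right := by simpa only [map_zpow, map_mul] using h.inverts_right.map f

theorem twist (h : IsSapphireTriple r s t u a b c) (n k : ℤ) :
    IsSapphireTriple r s t u (a * b ^ n) b (c * (a ^ (2 * t) * b ^ u) ^ k) where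
  inverts_left := h.inverts_left.mul_left (Commute.zpow_self b n)
  sq_eq := by
    rw [(h.inverts_right.zpow_right k).mul_sq, h.sq_eq,
      (h.inverts_left.zpow_right n).mul_zpow_two_mul]
  inverts_right := by
    rw [(h.inverts_left.zpow_right n).mul_zpow_two_mul]
    exact h.inverts_right.mul_left (Commute.zpow_self _ k)

theorem sq_middle (h : IsSapphireTriple r (2 * σ) t u a b c) :
    IsSapphireTriple r σ (2 * t) u a (b ^ 2) c where
  inverts_left := by simpa only [zpow_ofNat] using h.inverts_left.zpow_right 2
  sq_eq := by rw [h.sq_eq, zpow_mul, zpow_ofNat]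
  inverts_right := by
    rw [← h.inverts_left.zpow_mul_zpow_sq]
    simpa only [zpow_ofNat] using h.inverts_right.zpow_right 2

/- The hypotheses make `w` a square root of `a ^ (2 * (2 * t)) * b ^ u` that acts on `a`, `b`, `c`
as half of it. If `u = 2 * k + 1` and `b' ^ 2 = b`, the relation `w = a ^ (2 * t) * b' ^ u` to aim
for says that `w = a ^ (2 * t) * b ^ k * b'`, which leaves only one choice. -/
theorem exists_sq_eq_middle {w : E} (h : IsSapphireTriple r σ (2 * t) u a b c) (hu : Odd u)
    (hw : w ^ 2 = a ^ (2 * (2 * t)) * b ^ u) (hwa : SemiconjBy w a (a * b ^ (-u)))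
    (hwb : SemiconjBy w b b) (hwc : SemiconjBy w c (c * (w ^ 2)⁻¹)) :
    ∃ b', b' ^ 2 = b ∧ IsSapphireTriple r (2 * σ) t u a b' c := by
  obtain ⟨k, rfl⟩ := hu
  have hab := h.inverts_left
  set q := a ^ (2 * t) * b ^ k with hq
  have hq_sq : q ^ 2 * b = w ^ 2 := by
    rw [hw, hab.zpow_mul_zpow_sq, mul_assoc, zpow_add_one, zpow_mul b, zpow_ofNat]
  have hqb : Commute q b := hab.commute_zpow_mul_zpow t k
  have hwq : Commute w q := by
    have hwp : SemiconjBy w (a ^ (2 * t)) (a ^ (2 * t)) := by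
      simpa only [(hab.zpow_right _).mul_zpow_two_mul] using hwa.zpow_right (2 * t)
    exact hwp.mul_right (hwb.zpow_right k)
  have hsq : (w * q⁻¹) ^ 2 = b := by
    rw [hwq.inv_right.mul_pow, ← hq_sq, (hqb.pow_left 2).eq, inv_pow, mul_inv_cancel_right]
  have hpow : a ^ (2 * t) * (w * q⁻¹) ^ (2 * k + 1) = w := by
    rw [zpow_add_one, zpow_mul (w * q⁻¹), zpow_ofNat, hsq, ← mul_assoc, ← hq, ← mul_assoc,
      ← hwq.eq, mul_inv_cancel_right]
  have hconj : SemiconjBy (w * q⁻¹) a (a * b⁻¹) := by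
    have hqa : SemiconjBy q (a * b ^ (2 * k)) a := by
      simpa only [mul_assoc, ← zpow_add, neg_add_cancel, zpow_zero, mul_one] using
        (hab.semiconjBy_zpow_mul_zpow t k).mul_right (hqb.zpow_right (2 * k))
    have hwa' : SemiconjBy w (a * b ^ (2 * k)) (a * b⁻¹) := by
      simpa only [mul_assoc, ← zpow_add, neg_add_rev, neg_add_cancel_right, zpow_neg_one] using
        hwa.mul_right (hwb.zpow_right (2 * k))
    exact hwa'.mul_left hqa.inv_symm_left
  refine ⟨w * q⁻¹, hsq, inverts_iff_semiconjBy_mul_sq_inv.2 (by rwa [hsq]), ?_, ?_⟩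
  · rw [zpow_mul, zpow_ofNat, hsq, h.sq_eq]
  · rw [hpow]
    exact inverts_iff_semiconjBy_mul_sq_inv.2 hwc

end IsSapphireTriple

theorem eq_ker_of_sup_zpowers_eq_top {H : Subgroup E} {w : E} {φ : E →* F} (hH : H ≤ φ.ker)
    (hnorm : w ∈ Subgroup.normalizer (H : Set E)) (htop : H ⊔ Subgroup.zpowers w = ⊤)
    (hw : w ^ 2 ∈ H) (hφ : φ w ≠ 1) : H = φ.ker := by
  have hnormal : H.Normal := by
    rw [← Subgroup.normalizer_eq_top_iff, eq_top_iff, ← htop]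
    exact sup_le Subgroup.le_normalizer (Subgroup.zpowers_le.2 hnorm)
  refine le_antisymm hH fun x hx => ?_
  obtain ⟨y, hy, _, ⟨m, rfl⟩, rfl⟩ :=
    Subgroup.mem_sup_of_normal_left.1 (htop ▸ Subgroup.mem_top x)
  have hpow (k : ℤ) : w ^ (2 * k) ∈ H := by
    rw [zpow_mul, zpow_ofNat]
    exact H.zpow_mem hw k
  obtain ⟨k, rfl | rfl⟩ := Int.even_or_odd' m
  · exact H.mul_mem hy (hpow k)
  · refine absurd ?_ hφ
    have hyk : φ (y * w ^ (2 * k)) = 1 := hH (H.mul_mem hy (hpow k))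
    have hx_eq : φ (y * w ^ (2 * k + 1)) = 1 := hx
    rwa [zpow_add_one, ← mul_assoc, map_mul, hyk, one_mul] at hx_eq

section CyclicExtension

open SemidirectProduct

universe v

variable {N : Type v} [Group N] (τ : MulAut N) {w₀ : N} {n : ℕ}

theorem inl_inv_mul_inr_mem_center (hfix : τ w₀ = w₀) (hpow : τ ^ n = MulAut.conj w₀) :
    (inl w₀⁻¹ * inr (Multiplicative.ofAdd (n : ℤ)) :
      N ⋊[zpowersHom (MulAut N) τ] Multiplicative ℤ) ∈ Subgroup.center _ := by
  have hfix_zpow (j : ℤ) : (τ ^ j) w₀ = w₀ :=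
    (MulAction.stabilizer (MulAut N) w₀).zpow_mem (MulAction.mem_stabilizer_iff.2 hfix) j
  rw [Subgroup.mem_center_iff]
  intro p
  refine SemidirectProduct.ext ?_ (mul_comm _ _)
  simp [hpow, hfix_zpow, mul_assoc]

/- The extension is the quotient of `N ⋊ ℤ` by the central element `w₀⁻¹ * n`, which identifies `w₀`
with the `n`-th power of the generator of `ℤ`. -/
theorem exists_cyclic_extension (hn : n ≠ 0) (hfix : τ w₀ = w₀)
    (hpow : τ ^ n = MulAut.conj w₀) :
    ∃ (E : Type v) (_ : Group E) (ι : N →* E) (w : E), Function.Injective ι ∧ w ^ n = ι w₀ ∧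
      ∀ x, w * ι x * w⁻¹ = ι (τ x) := by
  let z : N ⋊[zpowersHom (MulAut N) τ] Multiplicative ℤ :=
    inl w₀⁻¹ * inr (Multiplicative.ofAdd (n : ℤ))
  have hz : z ∈ Subgroup.center _ := inl_inv_mul_inr_mem_center τ hfix hpow
  have hnormal : (Subgroup.zpowers z).Normal :=
    ⟨fun y hy x => by
      rwa [Subgroup.mem_center_iff.1 (Subgroup.zpowers_le.2 hz hy), mul_inv_cancel_right]⟩
  let π := QuotientGroup.mk' (Subgroup.zpowers z)
  refine ⟨_, inferInstance, π.comp inl, π (inr (Multiplicative.ofAdd 1)), ?_, ?_, fun x => ?_⟩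
  · rw [injective_iff_map_eq_one]
    intro x hx
    obtain ⟨k, hk⟩ := Subgroup.mem_zpowers_iff.1 ((QuotientGroup.eq_one_iff _).1 hx)
    have hk0 : k * n = 0 := by
      have := congrArg (fun p => Multiplicative.toAdd (rightHom p)) hk
      simpa [z, -rightHom_eq_right] using this
    obtain rfl : k = 0 := by simpa [hn] using hk0
    exact inl_injective (by simpa using hk.symm)
  · have hz_eq : (inl w₀)⁻¹ * inr (Multiplicative.ofAdd 1) ^ n = z := by
      rw [← map_inv, ← map_pow, ← ofAdd_nsmul, nsmul_one]
    exact (QuotientGroup.eq.2 (hz_eq ▸ Subgroup.mem_zpowers z)).symm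
  · refine congrArg π (?_ : inr _ * inl x * (inr _)⁻¹ = inl (τ x))
    simpa using (inl_aut (φ := zpowersHom (MulAut N) τ) (Multiplicative.ofAdd 1) x).symm

end CyclicExtension

namespace SapphireGroup

open PresentedGroup (of)

variable {r s t u σ : ℤ}

theorem hom_ext {f g : SapphireGroup r s t u →* E}
    (h0 : f (of 0) = g (of 0))
    (h1 : f (of 1) = g (of 1))
    (h2 : f (of 2) = g (of 2)) : f = g :=
  PresentedGroup.ext (Fin.forall_fin_succ.2 ⟨h0, Fin.forall_fin_two.2 ⟨h1, h2⟩⟩)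

theorem isSapphireTriple_of (r s t u : ℤ) : IsSapphireTriple r s t u
    (of 0 : SapphireGroup r s t u) (of 1) (of 2) := by
  rw [isSapphireTriple_iff_lift_eq_one]
  have hlift : FreeGroup.lift ![of 0, of 1, of 2] =
      PresentedGroup.mk (sapphireRels r s t u) := by
    ext i
    fin_cases i <;> simp [PresentedGroup.of]
  intro x hx
  rw [hlift, PresentedGroup.one_of_mem hx]

/-- The universal property of the sapphire group: the homomorphism sending the generators to a given
triple that satisfies the defining relations. -/
def lift {a b c : E} (h : IsSapphireTriple r s t u a b c) : SapphireGroup r s t u →* E :=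
  PresentedGroup.toGroup (isSapphireTriple_iff_lift_eq_one.1 h)

section

variable {a b c : E} (h : IsSapphireTriple r s t u a b c)

@[simp]
theorem lift_of_zero : lift h (of 0) = a :=
  PresentedGroup.toGroup.of _

@[simp]
theorem lift_of_one : lift h (of 1) = b :=
  PresentedGroup.toGroup.of _

@[simp]
theorem lift_of_two : lift h (of 2) = c :=
  PresentedGroup.toGroup.of _

end

/-- The element `a ^ (2 * t) * b ^ u`, which is inverted by `c`. When `u` is odd, it generates the
whole group together with the image of `sqHom`. -/
def fiber (r s t u : ℤ) : SapphireGroup r s t u :=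
  of 0 ^ (2 * t) * of 1 ^ u

/-- The endomorphism `a ↦ a * b ^ n`, `b ↦ b`, `c ↦ c * (a ^ (2 * t) * b ^ u) ^ k` underlying the
automorphism `twist`. -/
def twistHom (r s t u n k : ℤ) : SapphireGroup r s t u →* SapphireGroup r s t u :=
  lift ((isSapphireTriple_of r s t u).twist n k)

section

variable (r s t u n k n' k' : ℤ)

@[simp]
theorem twistHom_of_zero : twistHom r s t u n k (of 0) = of 0 * of 1 ^ n :=
  lift_of_zero _

@[simp]
theorem twistHom_of_one : twistHom r s t u n k (of 1) = of 1 :=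
  lift_of_one _

@[simp]
theorem twistHom_of_two : twistHom r s t u n k (of 2) = of 2 * fiber r s t u ^ k :=
  lift_of_two _

@[simp]
theorem twistHom_fiber : twistHom r s t u n k (fiber r s t u) = fiber r s t u := by
  simp [fiber, ((isSapphireTriple_of r s t u).inverts_left.zpow_right n).mul_zpow_two_mul]

theorem twistHom_comp_twistHom :
    (twistHom r s t u n k).comp (twistHom r s t u n' k') = twistHom r s t u (n + n') (k + k') := by
  apply hom_ext <;> simp [zpow_add, mul_assoc]

theorem twistHom_zero : twistHom r s t u 0 0 = MonoidHom.id _ := by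
  apply hom_ext <;> simp

/-- The automorphism `a ↦ a * b ^ n`, `b ↦ b`, `c ↦ c * (a ^ (2 * t) * b ^ u) ^ k`. Conjugation by
`fiber` is of this form, and so is a square root of it. -/
def twist (r s t u n k : ℤ) : MulAut (SapphireGroup r s t u) :=
  (twistHom r s t u n k).toMulEquiv (twistHom r s t u (-n) (-k))
    (by rw [twistHom_comp_twistHom, neg_add_cancel, neg_add_cancel, twistHom_zero])
    (by rw [twistHom_comp_twistHom, add_neg_cancel, add_neg_cancel, twistHom_zero])

theorem twist_apply (x : SapphireGroup r s t u) :
    twist r s t u n k x = twistHom r s t u n k x :=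
  rfl

theorem conj_fiber :
    (MulAut.conj (fiber r s t u)).toMonoidHom = twistHom r s t u (-(2 * u)) (-2) := by
  have h := isSapphireTriple_of r s t u
  have h0 : SemiconjBy (fiber r s t u) (of 0) (of 0 * of 1 ^ (-(2 * u))) :=
    h.inverts_left.semiconjBy_zpow_mul_zpow t u
  have h1 : SemiconjBy (fiber r s t u) (of 1) (of 1) := h.inverts_left.commute_zpow_mul_zpow t u
  have h2 : SemiconjBy (fiber r s t u) (of 2) (of 2 * fiber r s t u ^ (-2 : ℤ)) :=
    inverts_iff_semiconjBy_mul_sq_inv.1 h.inverts_right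
  apply hom_ext
  · rw [twistHom_of_zero]
    exact mul_inv_eq_iff_eq_mul.2 h0
  · rw [twistHom_of_one]
    exact mul_inv_eq_iff_eq_mul.2 h1
  · rw [twistHom_of_two]
    exact mul_inv_eq_iff_eq_mul.2 h2

theorem twist_sq_eq_conj_fiber :
    twist r s t u (-u) (-1) ^ 2 = MulAut.conj (fiber r s t u) := by
  have hcomp : (twistHom r s t u (-u) (-1)).comp (twistHom r s t u (-u) (-1)) =
      (MulAut.conj (fiber r s t u)).toMonoidHom := by
    rw [conj_fiber, twistHom_comp_twistHom, ← neg_add, ← two_mul, ← neg_add, one_add_one_eq_two]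
  exact MulEquiv.toMonoidHom_injective (by rw [← hcomp, sq]; rfl)

end

/-- The homomorphism `a ↦ a`, `b ↦ b ^ 2`, `c ↦ c`. For odd `u` it embeds its source as the kernel
of the mod 2 character with values `0, 1, 0` on `a, b, c`. -/
def sqHom (r σ t u : ℤ) : SapphireGroup r σ (2 * t) u →* SapphireGroup r (2 * σ) t u :=
  lift (isSapphireTriple_of r (2 * σ) t u).sq_middle

@[simp]
theorem sqHom_of_zero : sqHom r σ t u (of 0) = of 0 :=
  lift_of_zero _

@[simp]
theorem sqHom_of_one : sqHom r σ t u (of 1) = of 1 ^ 2 :=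
  lift_of_one _

@[simp]
theorem sqHom_of_two : sqHom r σ t u (of 2) = of 2 :=
  lift_of_two _

theorem sqHom_injective (hu : Odd u) : Function.Injective (sqHom r σ t u) := by
  obtain ⟨E, _, ι, w, hι, hw, hconj⟩ := exists_cyclic_extension (twist r σ (2 * t) u (-u) (-1))
    two_ne_zero (twistHom_fiber r σ (2 * t) u (-u) (-1)) (twist_sq_eq_conj_fiber r σ (2 * t) u)
  have hsemiconj (x) : SemiconjBy w (ι x) (ι (twist r σ (2 * t) u (-u) (-1) x)) :=
    mul_inv_eq_iff_eq_mul.1 (hconj x)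
  obtain ⟨b', hb', h⟩ := ((isSapphireTriple_of r σ (2 * t) u).map ι).exists_sq_eq_middle hu
    (w := w) (by simp [hw, fiber])
    (by simpa [twist_apply] using hsemiconj (of 0))
    (by simpa [twist_apply] using hsemiconj (of 1))
    (by simpa [twist_apply, hw] using hsemiconj (of 2))
  have hcomp : (lift h).comp (sqHom r σ t u) = ι := by
    apply hom_ext <;> simp [hb']
  exact .of_comp (f := lift h) (by rwa [← MonoidHom.coe_comp, hcomp])

theorem sqHom_fiber : sqHom r σ t u (fiber r σ (2 * t) u) = fiber r (2 * σ) t u ^ 2 := by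
  simp [fiber, (isSapphireTriple_of r (2 * σ) t u).inverts_left.zpow_mul_zpow_sq]

theorem twistHom_comp_sqHom (n k : ℤ) :
    (twistHom r (2 * σ) t u (2 * n) (2 * k)).comp (sqHom r σ t u) =
      (sqHom r σ t u).comp (twistHom r σ (2 * t) u n k) := by
  apply hom_ext <;> simp [sqHom_fiber, zpow_mul, zpow_ofNat]

theorem fiber_mem_normalizer_range_sqHom :
    fiber r (2 * σ) t u ∈ Subgroup.normalizer ((sqHom r σ t u).range : Set _) := by
  have hcomp : (MulAut.conj (fiber r (2 * σ) t u)).toMonoidHom.comp (sqHom r σ t u) =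
      (sqHom r σ t u).comp (twist r σ (2 * t) u (-u) (-1)).toMonoidHom := by
    rw [conj_fiber, ← mul_neg, show (-2 : ℤ) = 2 * -1 from rfl, twistHom_comp_sqHom]
    rfl
  rw [Subgroup.mem_normalizer_iff_map_conj_eq]
  calc (sqHom r σ t u).range.map (MulAut.conj (fiber r (2 * σ) t u)).toMonoidHom
    _ = (twist r σ (2 * t) u (-u) (-1)).toMonoidHom.range.map (sqHom r σ t u) := by
      rw [← MonoidHom.range_comp, hcomp, MonoidHom.range_comp]
    _ = (sqHom r σ t u).range := by
      rw [MonoidHom.range_eq_top.2 (MulEquiv.surjective _), MonoidHom.range_eq_map]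

theorem range_sqHom_sup_zpowers_fiber (hu : Odd u) :
    (sqHom r σ t u).range ⊔ Subgroup.zpowers (fiber r (2 * σ) t u) = ⊤ := by
  set S := (sqHom r σ t u).range ⊔ Subgroup.zpowers (fiber r (2 * σ) t u)
  have hS (x) : sqHom r σ t u x ∈ S := Subgroup.mem_sup_left ⟨x, rfl⟩
  have h0 : of 0 ∈ S := sqHom_of_zero ▸ hS (of 0)
  have h1 : of 1 ∈ S := by
    have hsq : of 1 ^ 2 ∈ S := sqHom_of_one ▸ hS (of 1)
    have hpow : of 1 ^ u ∈ S := by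
      rw [← S.mul_mem_cancel_left (S.zpow_mem h0 (2 * t))]
      exact Subgroup.mem_sup_right (Subgroup.mem_zpowers (fiber r (2 * σ) t u))
    obtain ⟨k, rfl⟩ := hu
    rw [zpow_add_one, zpow_mul, zpow_ofNat] at hpow
    exact (S.mul_mem_cancel_left (S.zpow_mem hsq k)).1 hpow
  have h2 : of 2 ∈ S := sqHom_of_two ▸ hS (of 2)
  exact eq_top_iff.2 fun x _ => PresentedGroup.generated_by _ S
    (Fin.forall_fin_succ.2 ⟨h0, Fin.forall_fin_two.2 ⟨h1, h2⟩⟩) x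

theorem range_sqHom_eq_ker (hu : Odd u) (φ : SapphireGroup r (2 * σ) t u →* E)
    (h0 : φ (of 0) = 1) (h1 : φ (of 1) ≠ 1) (h1_sq : φ (of 1) ^ 2 = 1) (h2 : φ (of 2) = 1) :
    (sqHom r σ t u).range = φ.ker := by
  have hfiber : φ (fiber r (2 * σ) t u) = φ (of 1) := by
    obtain ⟨k, rfl⟩ := hu
    simp [fiber, h0, zpow_add_one, zpow_mul, zpow_ofNat, h1_sq]
  refine eq_ker_of_sup_zpowers_eq_top ?_ fiber_mem_normalizer_range_sqHom
    (range_sqHom_sup_zpowers_fiber hu) ⟨_, sqHom_fiber⟩ (by rwa [hfiber])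
  have hcomp : φ.comp (sqHom r σ t u) = 1 := by
    apply hom_ext <;> simp [h0, h1_sq, h2]
  rintro _ ⟨x, rfl⟩
  exact DFunLike.congr_fun hcomp x

theorem nonempty_ker_mulEquiv (hu : Odd u) (φ : SapphireGroup r (2 * σ) t u →* E) {g : E}
    (hg : g ≠ 1) (hg_sq : g ^ 2 = 1) (h0 : φ (of 0) = g) (h1 : φ (of 1) = g) (h2 : φ (of 2) = g) :
    Nonempty (φ.ker ≃* SapphireGroup r σ (2 * t) u) := by
  have hfiber : φ (fiber r (2 * σ) t u) = g := by
    obtain ⟨k, rfl⟩ := hu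
    simp [fiber, h0, h1, zpow_add_one, zpow_mul, zpow_ofNat, hg_sq]
  have hrange := range_sqHom_eq_ker hu (φ.comp (twistHom r (2 * σ) t u 1 1))
    (by simp [h0, h1, ← sq, hg_sq]) (by simpa [h1]) (by simpa [h1])
    (by simp [h2, hfiber, ← sq, hg_sq])
  let θ := twist r (2 * σ) t u 1 1
  have hmap : φ.ker.map θ.symm.toMonoidHom = (sqHom r σ t u).range :=
    (MonoidHom.ker_comp_mulEquiv φ θ).symm.trans hrange.symm
  exact ⟨((θ.symm.subgroupMap φ.ker).trans (MulEquiv.subgroupCongr hmap)).trans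
    (MonoidHom.ofInjective (sqHom_injective hu)).symm⟩

end SapphireGroup

theorem odd_of_odd_mul_sub_mul {r s t u : ℤ} (hs : Even s) (h : Odd (r * u - s * t)) : Odd u := by
  rw [Int.odd_sub, Int.odd_mul] at h
  exact (h.2 (hs.mul_right t)).2

open SapphireGroup in
theorem stmt7_general (r s t u : ℤ) (hs : Even s) (hu : Odd u) :
    (∃! φ : SapphireGroup r s t u →* Multiplicative (ZMod 2),
      φ (PresentedGroup.of 0) = Multiplicative.ofAdd (1 : ZMod 2) ∧
      φ (PresentedGroup.of 1) = Multiplicative.ofAdd (1 : ZMod 2) ∧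
      φ (PresentedGroup.of 2) = Multiplicative.ofAdd (1 : ZMod 2)) ∧
    ∀ φ : SapphireGroup r s t u →* Multiplicative (ZMod 2),
      φ (PresentedGroup.of 0) = Multiplicative.ofAdd (1 : ZMod 2) →
      φ (PresentedGroup.of 1) = Multiplicative.ofAdd (1 : ZMod 2) →
      φ (PresentedGroup.of 2) = Multiplicative.ofAdd (1 : ZMod 2) →
      Nonempty (φ.ker ≃* SapphireGroup r (s / 2) (2 * t) u) := by
  have sq_eq_one : ∀ x : Multiplicative (ZMod 2), x ^ 2 = 1 := by decide
  constructor
  · exact ⟨lift (isSapphireTriple_of_forall_sq_eq_one sq_eq_one r t u hs _ _ _),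
      ⟨lift_of_zero _, lift_of_one _, lift_of_two _⟩,
      fun ψ ⟨h0, h1, h2⟩ => hom_ext (by rw [h0, lift_of_zero]) (by rw [h1, lift_of_one])
        (by rw [h2, lift_of_two])⟩
  · obtain ⟨σ, rfl⟩ := hs.two_dvd
    rw [Int.mul_ediv_cancel_left σ two_ne_zero]
    exact fun φ => nonempty_ker_mulEquiv hu φ (by decide) (sq_eq_one _)

theorem stmt7 (r s t u : ℤ) (h : r * u - s * t = 1 ∨ r * u - s * t = -1) (hs : Even s) :
    (∃! φ : SapphireGroup r s t u →* Multiplicative (ZMod 2),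
      φ (PresentedGroup.of 0) = Multiplicative.ofAdd (1 : ZMod 2) ∧
      φ (PresentedGroup.of 1) = Multiplicative.ofAdd (1 : ZMod 2) ∧
      φ (PresentedGroup.of 2) = Multiplicative.ofAdd (1 : ZMod 2)) ∧
    ∀ φ : SapphireGroup r s t u →* Multiplicative (ZMod 2),
      φ (PresentedGroup.of 0) = Multiplicative.ofAdd (1 : ZMod 2) →
      φ (PresentedGroup.of 1) = Multiplicative.ofAdd (1 : ZMod 2) →
      φ (PresentedGroup.of 2) = Multiplicative.ofAdd (1 : ZMod 2) →
      Nonempty (φ.ker ≃* SapphireGroup r (s / 2) (2 * t) u) :=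
  stmt7_general r s t u hs
    (odd_of_odd_mul_sub_mul hs (by rcases h with h | h <;> rw [h] <;> decide))
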